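/- Let G be a simple graph that is S_{1,1,2}-free (chair-free) and C_4-free (contains no induced cycle on four vertices). Suppose a vertex x has three pairwise non-adjacent neighbours y, u, v. Then every neighbour w of u satisfies: w = x, or w is adjacent to x, or w is adjacent to y. -/

import Mathlib

/-- The chair `S_{1,1,2}`: centre `0` adjacent to `1`, `2` and `3`, with the
extra edge `3-4`. -/
def chair : SimpleGraph (Fin 5) :=
  SimpleGraph.fromEdgeSet {s(0, 1), s(0, 2), s(0, 3), s(3, 4)}

/-- The cycle `C_4` on four vertices. -/
def C4 : SimpleGraph (Fin 4) :=
  SimpleGraph.fromEdgeSet {s(0, 1), s(1, 2), s(2, 3), s(3, 0)}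

theorem nonempty_chair_embedding {V : Type*} {G : SimpleGraph V} {c a b p q : V}
    (hab : a ≠ b) (hca : G.Adj c a) (hcb : G.Adj c b) (hcp : G.Adj c p) (hpq : G.Adj p q)
    (hqc : q ≠ c) (hnab : ¬ G.Adj a b) (hnap : ¬ G.Adj a p) (hnbp : ¬ G.Adj b p)
    (hncq : ¬ G.Adj c q) (hnaq : ¬ G.Adj a q) (hnbq : ¬ G.Adj b q) :
    Nonempty (chair ↪g G) := by
  have hap : a ≠ p := by rintro rfl; exact hnaq hpq
  have hbp : b ≠ p := by rintro rfl; exact hnbq hpq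
  have haq : a ≠ q := by rintro rfl; exact hncq hca
  have hbq : b ≠ q := by rintro rfl; exact hncq hcb
  have hinj : Function.Injective ![c, a, b, p, q] := by
    intro i j h
    fin_cases i <;> fin_cases j <;>
      simp_all [hca.ne, hcb.ne, hcp.ne, hpq.ne, hca.ne', hcb.ne', hcp.ne', hpq.ne', hab.symm,
        hqc.symm, hap.symm, hbp.symm, haq.symm, hbq.symm]
  refine ⟨⟨⟨![c, a, b, p, q], hinj⟩, ?_⟩⟩
  intro i j
  fin_cases i <;> fin_cases j <;> simp_all [chair, G.adj_comm]

theorem nonempty_C4_embedding {V : Type*} {G : SimpleGraph V} {w x y z : V}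
    (hwy : w ≠ y) (hxz : x ≠ z) (hwx : G.Adj w x) (hxy : G.Adj x y) (hyz : G.Adj y z)
    (hzw : G.Adj z w) (hnwy : ¬ G.Adj w y) (hnxz : ¬ G.Adj x z) :
    Nonempty (C4 ↪g G) := by
  have hinj : Function.Injective ![w, x, y, z] := by
    intro i j h
    fin_cases i <;> fin_cases j <;>
      simp_all [hwx.ne, hxy.ne, hyz.ne, hzw.ne, hwx.ne', hxy.ne', hyz.ne', hzw.ne', hwy.symm,
        hxz.symm]
  refine ⟨⟨⟨![w, x, y, z], hinj⟩, ?_⟩⟩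
  intro i j
  fin_cases i <;> fin_cases j <;> simp_all [C4, G.adj_comm]

/-- in a chair-free and (induced) `C_4`-free graph, if `x` has
three pairwise non-adjacent neighbours `y`, `u`, `v`, then every neighbour `w`
of `u` satisfies `w = x`, or `w` is adjacent to `x`, or `w` is adjacent to `y`. -/
theorem stmt_15 {V : Type*} [Fintype V] (G : SimpleGraph V)
    (hchair : ¬ Nonempty (chair ↪g G)) (hC4 : ¬ Nonempty (C4 ↪g G))
    (x y u v : V) (hyu : y ≠ u) (hyv : y ≠ v) (huv : u ≠ v)
    (hxy : G.Adj x y) (hxu : G.Adj x u) (hxv : G.Adj x v)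
    (hnyu : ¬ G.Adj y u) (hnyv : ¬ G.Adj y v) (hnuv : ¬ G.Adj u v) :
    ∀ w : V, G.Adj u w → w = x ∨ G.Adj w x ∨ G.Adj w y := by
  intro w huw
  by_contra! h
  obtain ⟨hwx, hnwx, hnwy⟩ := h
  by_cases hwv : G.Adj w v
  · exact hC4 (nonempty_C4_embedding hwx.symm huv hxu huw hwv hxv.symm
      (fun h => hnwx h.symm) hnuv)
  · exact hchair (nonempty_chair_embedding hyv hxy hxv hxu huw hwx hnyv hnyu
      (fun h => hnuv h.symm) (fun h => hnwx h.symm) (fun h => hnwy h.symm)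
      (fun h => hwv h.symm))
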